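/- arXiv:2412.07483 — 6 statements merged into one kernel-verified Lean document; each statement's English description precedes it below -/
import Mathlib

section
/- Let f = t0·t1·t2 + t0·t1·t3 + t0·t2·t3 + t1·t2·t3 in ℂ[t0,t1,t2,t3]. Then the set of points x ∈ ℂ⁴ at which all four partial derivatives of f vanish, {x ∈ ℂ⁴ : ∀ i, (∂ᵢ f)(x) = 0}, is exactly the union of the four coordinate axes ℂ·e0 ∪ ℂ·e1 ∪ ℂ·e2 ∪ ℂ·e3. (Hence the Cayley cubic surface {f = 0} ⊂ ℙ³ has exactly the four coordinate points as singular points, each an A1 singularity.) -/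
/-!
The Cayley cubic is the elementary symmetric polynomial `f` of degree `n - 1` in `n = 4` variables.
At a common zero `x` of its partial derivatives, Euler's identity `∑ xᵢ ∂ᵢf = (n - 1) f` gives
`f = 0` as soon as `n - 1` is nonzero in the coefficients, and then `f = ∏_{j ≠ i} xⱼ + xᵢ ∂ᵢf`
gives `∏_{j ≠ i} xⱼ = 0` for every `i`. Since `∂ᵢf` is again elementary symmetric of codegree one,
now in the variables other than `xᵢ`, the polynomial `∏_{j ≠ i} (T + xⱼ)` has zero constant and
linear coefficients, so at least two of the `xⱼ` with `j ≠ i` vanish. This holds for every `i`, so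
at least three coordinates of `x` vanish.
-/

open MvPolynomial

noncomputable def cayleyCubic : MvPolynomial (Fin 4) ℂ :=
  X 0 * X 1 * X 2 + X 0 * X 1 * X 3 + X 0 * X 2 * X 3 + X 1 * X 2 * X 3

noncomputable def e (i : Fin 4) : Fin 4 → ℂ := Pi.single i 1

open Finset

section EsymmOmitOne

variable {ι A B : Type*} [DecidableEq ι] [CommSemiring A] [CommSemiring B]

/-- The elementary symmetric function of degree `#s - 1` of the family `f` on `s`, used to express
the partial derivatives of the elementary symmetric polynomial of codegree one. Indexing by the
omitted factor makes it `0` for `s = ∅`, where the truncated degree `#s - 1` would give `1`. -/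
def esymmOmitOne (s : Finset ι) (f : ι → A) : A :=
  ∑ i ∈ s, ∏ j ∈ s.erase i, f j

theorem map_esymmOmitOne (φ : A →+* B) (s : Finset ι) (f : ι → A) :
    φ (esymmOmitOne s f) = esymmOmitOne s (φ ∘ f) := by
  simp [esymmOmitOne]

theorem esymmOmitOne_eq_prod_erase_add {s : Finset ι} {i : ι} (hi : i ∈ s) (f : ι → A) :
    esymmOmitOne s f = ∏ j ∈ s.erase i, f j + f i * esymmOmitOne (s.erase i) f := by
  rw [esymmOmitOne, ← add_sum_erase s _ hi, esymmOmitOne, mul_sum]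
  congr 1
  refine sum_congr rfl fun k hk ↦ ?_
  rw [erase_right_comm, mul_prod_erase _ _ (mem_erase.2 ⟨(ne_of_mem_erase hk).symm, hi⟩)]

theorem esymmOmitOne_eq_prod_erase {s : Finset ι} {i : ι} (hi : i ∈ s) {f : ι → A}
    (hf : f i = 0) : esymmOmitOne s f = ∏ j ∈ s.erase i, f j := by
  rw [esymmOmitOne_eq_prod_erase_add hi, hf, zero_mul, add_zero]

theorem two_le_card_zeros_iff [NoZeroDivisors A] [Nontrivial A] [DecidableEq A] (s : Finset ι)
    (f : ι → A) :
    2 ≤ #{i ∈ s | f i = 0} ↔ ∏ i ∈ s, f i = 0 ∧ esymmOmitOne s f = 0 := by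
  constructor
  · intro h
    obtain ⟨i, hi, j, hj, hij⟩ := one_lt_card.1 h
    rw [mem_filter] at hi hj
    rw [esymmOmitOne_eq_prod_erase hi.1 hi.2]
    exact ⟨prod_eq_zero hi.1 hi.2, prod_eq_zero (mem_erase.2 ⟨hij.symm, hj.1⟩) hj.2⟩
  · rintro ⟨hprod, hsum⟩
    obtain ⟨i, hi, hfi⟩ := prod_eq_zero_iff.1 hprod
    rw [esymmOmitOne_eq_prod_erase hi hfi] at hsum
    obtain ⟨j, hj, hfj⟩ := prod_eq_zero_iff.1 hsum
    exact one_lt_card.2 ⟨i, mem_filter.2 ⟨hi, hfi⟩, j, mem_filter.2 ⟨mem_of_mem_erase hj, hfj⟩,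
      (ne_of_mem_erase hj).symm⟩

end EsymmOmitOne

theorem forall_le_card_erase_iff {ι : Type*} [DecidableEq ι] [Nonempty ι] {t : Finset ι} {k : ℕ}
    (hk : k ≠ 0) : (∀ i, k ≤ #(t.erase i)) ↔ k + 1 ≤ #t := by
  constructor
  · intro h
    obtain ⟨i, hi⟩ : t.Nonempty := by
      obtain ⟨i⟩ := ‹Nonempty ι›
      exact (card_pos.1 (hk.bot_lt.trans_le (h i))).mono (erase_subset i t)
    rw [← card_erase_add_one hi]
    exact Nat.add_le_add_right (h i) 1
  · exact fun h i ↦ (Nat.le_sub_one_of_lt h).trans pred_card_le_card_erase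

section CriticalPoints

variable {σ R : Type*} [CommSemiring R]

theorem pderiv_prod_X_of_notMem {s : Finset σ} {i : σ} (hi : i ∉ s) :
    pderiv i (∏ j ∈ s, X j : MvPolynomial σ R) = 0 :=
  prod_induction _ (pderiv i · = 0) (fun p q hp hq ↦ by simp [hp, hq]) pderiv_one
    fun _ hj ↦ pderiv_X_of_ne (ne_of_mem_of_not_mem hj hi)

theorem pderiv_esymmOmitOne_X [DecidableEq σ] {s : Finset σ} {i : σ} (hi : i ∈ s) :
    pderiv i (esymmOmitOne s X : MvPolynomial σ R) = esymmOmitOne (s.erase i) X := by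
  have hprod : pderiv i (∏ j ∈ s.erase i, X j : MvPolynomial σ R) = 0 :=
    pderiv_prod_X_of_notMem (notMem_erase i s)
  have hsum : pderiv i (esymmOmitOne (s.erase i) X : MvPolynomial σ R) = 0 := by
    rw [esymmOmitOne, map_sum]
    exact sum_eq_zero fun k _ ↦
      pderiv_prod_X_of_notMem fun h ↦ notMem_erase i s (mem_of_mem_erase h)
  rw [esymmOmitOne_eq_prod_erase_add hi, map_add, pderiv_mul, hprod, hsum, pderiv_X_self]
  simp

theorem esymm_card_sub_one [Fintype σ] [DecidableEq σ] [Nonempty σ] :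
    esymm σ R (Fintype.card σ - 1) = esymmOmitOne univ X := by
  have himage : powersetCard (Fintype.card σ - 1) univ = univ.image (univ.erase · : σ → _) := by
    ext t
    rw [mem_powersetCard_univ, mem_image]
    constructor
    · intro ht
      have hcard : #t + 1 = #(univ : Finset σ) := by
        rw [ht, Nat.sub_add_cancel Fintype.card_pos, card_univ]
      obtain ⟨i, hi, hinsert⟩ := exists_eq_insert_iff.2 ⟨subset_univ t, hcard⟩
      exact ⟨i, mem_univ i, by rw [← hinsert, erase_insert hi]⟩
    · rintro ⟨i, hi, rfl⟩
      exact card_erase_of_mem hi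
  rw [esymm, himage, sum_image (by simpa using erase_injOn univ), esymmOmitOne]

theorem isHomogeneous_esymm [Fintype σ] (n : ℕ) : (esymm σ R n).IsHomogeneous n := by
  refine IsHomogeneous.sum _ _ _ fun t ht ↦ ?_
  rw [← (mem_powersetCard.1 ht).2, card_eq_sum_ones]
  exact IsHomogeneous.prod _ _ _ fun i _ ↦ isHomogeneous_X R i

theorem eval_eq_zero_of_eval_pderiv_eq_zero [Finite σ] [NoZeroDivisors R]
    {φ : MvPolynomial σ R} {n : ℕ} (hφ : φ.IsHomogeneous n) (hn : (n : R) ≠ 0) {x : σ → R}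
    (hx : ∀ i, eval x (pderiv i φ) = 0) : eval x φ = 0 := by
  have := Fintype.ofFinite σ
  have euler := congrArg (eval x) hφ.sum_X_mul_pderiv
  simpa [hx, hn] using euler.symm

variable [Fintype σ]

theorem eval_esymm_card_sub_one [DecidableEq σ] [Nonempty σ] (x : σ → R) :
    eval x (esymm σ R (Fintype.card σ - 1)) = esymmOmitOne univ x := by
  rw [esymm_card_sub_one, map_esymmOmitOne]
  simp [Function.comp_def]

theorem eval_pderiv_esymm_card_sub_one [DecidableEq σ] (x : σ → R) (i : σ) :
    eval x (pderiv i (esymm σ R (Fintype.card σ - 1))) = esymmOmitOne (univ.erase i) x := by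
  have : Nonempty σ := ⟨i⟩
  rw [esymm_card_sub_one, pderiv_esymmOmitOne_X (mem_univ i), map_esymmOmitOne]
  simp [Function.comp_def]

theorem prod_erase_eq_zero_of_eval_pderiv_eq_zero [DecidableEq σ] [NoZeroDivisors R]
    (h : ((Fintype.card σ - 1 : ℕ) : R) ≠ 0) {x : σ → R}
    (hx : ∀ i, eval x (pderiv i (esymm σ R (Fintype.card σ - 1))) = 0) (i : σ) :
    ∏ j ∈ univ.erase i, x j = 0 := by
  have : Nonempty σ := ⟨i⟩
  have hf := eval_eq_zero_of_eval_pderiv_eq_zero (isHomogeneous_esymm _) h hx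
  rwa [eval_esymm_card_sub_one, esymmOmitOne_eq_prod_erase_add (mem_univ i),
    ← eval_pderiv_esymm_card_sub_one, hx i, mul_zero, add_zero] at hf

theorem cayleyCubic_singular_locus_general [NoZeroDivisors R] [DecidableEq R]
    (h : ((Fintype.card σ - 1 : ℕ) : R) ≠ 0) (x : σ → R) :
    (∀ i, eval x (pderiv i (esymm σ R (Fintype.card σ - 1))) = 0) ↔ 3 ≤ #{i | x i = 0} := by
  classical
  have : Nontrivial R := nontrivial_of_ne _ _ h
  have : Nonempty σ := by
    by_contra hσ
    simp [not_nonempty_iff.1 hσ] at h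
  calc (∀ i, eval x (pderiv i (esymm σ R (Fintype.card σ - 1))) = 0)
    _ ↔ ∀ i, ∏ j ∈ univ.erase i, x j = 0 ∧ esymmOmitOne (univ.erase i) x = 0 := by
      simp only [← eval_pderiv_esymm_card_sub_one]
      exact ⟨fun hx i ↦ ⟨prod_erase_eq_zero_of_eval_pderiv_eq_zero h hx i, hx i⟩,
        fun hx i ↦ (hx i).2⟩
    _ ↔ ∀ i, 2 ≤ #(({j | x j = 0} : Finset σ).erase i) := by
      simp only [← two_le_card_zeros_iff, filter_erase]
    _ ↔ 3 ≤ #{i | x i = 0} := forall_le_card_erase_iff two_ne_zero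

end CriticalPoints

section CoordinateAxes

variable {ι R : Type*} [DecidableEq ι] [Semiring R]

theorem mem_span_single_one_iff {i : ι} {x : ι → R} :
    x ∈ Submodule.span R {Pi.single i 1} ↔ ∀ j, x j ≠ 0 → j = i := by
  rw [Submodule.mem_span_singleton]
  constructor
  · rintro ⟨a, rfl⟩ j hj
    by_contra hji
    simp [hji] at hj
  · refine fun h ↦ ⟨x i, ?_⟩
    ext j
    by_cases hji : j = i
    · simp [hji]
    · simpa [hji] using (not_imp_comm.1 (h j) hji).symm

theorem exists_mem_span_single_one_iff [Fintype ι] [Nonempty ι] [DecidableEq R] {x : ι → R} :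
    (∃ i, x ∈ Submodule.span R {Pi.single i 1}) ↔ Fintype.card ι ≤ #{i | x i = 0} + 1 := by
  have hcard : #{i | x i = 0} + #{i | x i ≠ 0} = Fintype.card ι :=
    card_filter_add_card_filter_not _
  calc (∃ i, x ∈ Submodule.span R {Pi.single i 1})
    _ ↔ #{i | x i ≠ 0} ≤ 1 := by
      simp [card_le_one_iff_subset_singleton, subset_iff, mem_span_single_one_iff]
    _ ↔ Fintype.card ι ≤ #{i | x i = 0} + 1 := by lia

end CoordinateAxes

theorem cayleyCubic_eq_esymm : cayleyCubic = esymm (Fin 4) ℂ (Fintype.card (Fin 4) - 1) := by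
  have h : ∀ i : Fin 4, (univ.erase i : Finset (Fin 4)) = {i + 1, i + 2, i + 3} := by decide
  rw [esymm_card_sub_one, esymmOmitOne, cayleyCubic]
  simp only [h, mem_insert, add_right_inj, Fin.reduceEq, mem_singleton, or_self,
    not_false_eq_true, prod_insert, prod_singleton, Fin.sum_univ_four, zero_add, Fin.reduceAdd]
  ring

theorem union_span_e_eq :
    (Submodule.span ℂ {e 0} : Set (Fin 4 → ℂ)) ∪
      (Submodule.span ℂ {e 1} : Set (Fin 4 → ℂ)) ∪
      (Submodule.span ℂ {e 2} : Set (Fin 4 → ℂ)) ∪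
      (Submodule.span ℂ {e 3} : Set (Fin 4 → ℂ)) = {x | 3 ≤ #{i | x i = 0}} := by
  ext x
  have haxes := exists_mem_span_single_one_iff (x := x)
  simpa [Fin.exists_fin_succ, or_assoc, e] using haxes

theorem cayleyCubic_singular_locus :
    {x : Fin 4 → ℂ | ∀ i, eval x (pderiv i cayleyCubic) = 0} =
      (Submodule.span ℂ {e 0} : Set (Fin 4 → ℂ)) ∪
      (Submodule.span ℂ {e 1} : Set (Fin 4 → ℂ)) ∪
      (Submodule.span ℂ {e 2} : Set (Fin 4 → ℂ)) ∪
      (Submodule.span ℂ {e 3} : Set (Fin 4 → ℂ)) := by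
  rw [cayleyCubic_eq_esymm, union_span_e_eq]
  exact Set.ext (cayleyCubic_singular_locus_general (by norm_num))
end

section
/- Let g = t0·t2·t3 − t1²·t3 − t0·t1² in ℂ[t0,t1,t2,t3]. A 2-dimensional ℂ-subspace W ⊆ ℂ⁴ satisfies g(x) = 0 for all x ∈ W if and only if W is one of the following five subspaces: span{e2, e3}, span{e0, e2}, span{e0, e3}, span{e1, e2}, span{e0 − e3, e1}. (Hence the cubic surface of type 2A1A3 contains exactly 5 lines: R23 = {t0 = t1 = 0}, R02 = {t1 = t3 = 0}, R03 = {t1 = t2 = 0}, L1 = {t0 = t3 = 0}, and L2 = {t2 = t0 + t3 = 0}.) -/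
open MvPolynomial

noncomputable def cubic2A1A3 : MvPolynomial (Fin 4) ℂ :=
  X 0 * X 2 * X 3 - X 1 ^ 2 * X 3 - X 0 * X 1 ^ 2

/-!
Restricted to a plane `W`, the coordinates become linear forms with `ℓ₀ ℓ₂ ℓ₃ = ℓ₁² (ℓ₀ + ℓ₃)`. If
`ℓ₁ = 0`, one of `ℓ₀`, `ℓ₂`, `ℓ₃` vanishes. Otherwise choose a nonzero `u ∈ W` with `ℓ₁ u = 0` and
compare coefficients along the lines `s ↦ v + s u`, on which `ℓ₁` is constant: either `ℓ₀` and
`ℓ₃` both vanish at `u`, and then they vanish on `W`, or neither does, and then `ℓ₂` and `ℓ₀ + ℓ₃`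
vanish on `W`.
-/

theorem quadratic_coeffs_eq_zero {R : Type*} [CommRing R] [IsDomain R] (hR : 2 < ENat.card R)
    {a b c : R} (h : ∀ s : R, a + b * s + c * s ^ 2 = 0) : a = 0 ∧ b = 0 ∧ c = 0 := by
  obtain ⟨t, ht₀, ht₁⟩ : ∃ t : R, t ≠ 0 ∧ t ≠ 1 := by
    by_contra! hcover
    have huniv : (Set.univ : Set R) ⊆ {0, 1} := fun t _ ↦ or_iff_not_imp_left.2 (hcover t)
    have hcard := (Set.encard_le_encard huniv).trans (Set.encard_pair zero_ne_one).le
    rw [Set.encard_univ] at hcard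
    exact hcard.not_gt hR
  have ha : a = 0 := by linear_combination h 0
  have hsum : b + c = 0 := by linear_combination h 1 - ha
  have hc : c = 0 := by
    have hprod : t * (t - 1) * c = 0 := by linear_combination h t - ha - t * hsum
    exact (mul_eq_zero.1 hprod).resolve_left (mul_ne_zero ht₀ (sub_ne_zero.2 ht₁))
  exact ⟨ha, by simpa [hc] using hsum, hc⟩

section LinearMaps

variable {R M N P : Type*} [Semiring R] [AddCommMonoid M] [AddCommMonoid N] [AddCommMonoid P]
  [Module R M] [Module R N] [Module R P]

theorem eq_zero_of_forall_apply_ne_zero_imp {f : M →ₗ[R] N} {g : M →ₗ[R] P} (hf : f ≠ 0)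
    (h : ∀ v, f v ≠ 0 → g v = 0) : g = 0 := by
  obtain ⟨v, hv⟩ := DFunLike.ne_iff.1 hf
  ext w
  by_cases hw : f w = 0
  · simpa [h v hv] using h (v + w) (by simpa [hw] using hv)
  · exact h w hw

theorem eq_zero_or_eq_zero_of_forall_apply_mul_eq_zero [NoZeroDivisors R] {f g : M →ₗ[R] R}
    (h : ∀ v, f v * g v = 0) : f = 0 ∨ g = 0 :=
  or_iff_not_imp_left.2 fun hf ↦
    eq_zero_of_forall_apply_ne_zero_imp hf fun v ↦ (mul_eq_zero.1 (h v)).resolve_left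

end LinearMaps

section LinearForms

variable {R M : Type*} [CommRing R] [AddCommGroup M] [Module R M]

theorem eq_zero_or_eq_zero_or_eq_zero_of_forall_apply_mul_mul_eq_zero [IsDomain R]
    (hR : 2 < ENat.card R) {f g h : M →ₗ[R] R} (hfgh : ∀ v, f v * g v * h v = 0) :
    f = 0 ∨ g = 0 ∨ h = 0 := by
  refine or_iff_not_imp_left.2 fun hf ↦ eq_zero_or_eq_zero_of_forall_apply_mul_eq_zero fun w ↦ ?_
  obtain ⟨v, hv⟩ := DFunLike.ne_iff.1 hf
  have hgh {x : M} (hx : f x ≠ 0) : g x * h x = 0 :=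
    (mul_eq_zero.1 ((mul_assoc _ _ _).symm.trans (hfgh x))).resolve_left hx
  by_cases hw : f w = 0
  · refine (quadratic_coeffs_eq_zero hR (a := g v * h v) (b := g v * h w + g w * h v)
      fun s ↦ ?_).2.2
    have hline := hgh (x := v + s • w) (by simpa [hw] using hv)
    simp only [map_add, map_smul, smul_eq_mul] at hline
    linear_combination hline
  · exact hgh hw

/-- The pullback of the cubic `t₀ t₂ t₃ - t₁² t₃ - t₀ t₁²` along the linear map
`(a, b, c, d) : M → R⁴` vanishes pointwise. The equation is arranged to show its symmetry under
`a ↔ d`. -/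
def PullbackVanishes (a b c d : M →ₗ[R] R) : Prop :=
  ∀ v, a v * c v * d v = b v ^ 2 * (a v + d v)

namespace PullbackVanishes

variable {a b c d : M →ₗ[R] R}

theorem symm (h : PullbackVanishes a b c d) : PullbackVanishes d b c a :=
  fun v ↦ by linear_combination h v

variable [IsDomain R]

/-- The coefficients of `s` and `s ^ 2` in the equation at `v + s • u`. -/
theorem coeffs_add_smul (h : PullbackVanishes a b c d) (hR : 2 < ENat.card R) {u : M}
    (hu : b u = 0) (v : M) :
    a u * c v * d v + a v * c u * d v + a v * c v * d u = b v ^ 2 * (a u + d u) ∧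
      a u * c u * d v + a u * c v * d u + a v * c u * d u = 0 := by
  have hcubic : a u * c u * d u = 0 := by simpa [hu] using h u
  have hcoeffs := quadratic_coeffs_eq_zero hR
    (a := a v * c v * d v - b v ^ 2 * (a v + d v))
    (b := a u * c v * d v + a v * c u * d v + a v * c v * d u - b v ^ 2 * (a u + d u))
    (c := a u * c u * d v + a u * c v * d u + a v * c u * d u) fun s ↦ by
      have hline := h (v + s • u)
      simp only [map_add, map_smul, smul_eq_mul, hu] at hline
      linear_combination hline - s ^ 3 * hcubic
  exact ⟨sub_eq_zero.1 hcoeffs.2.1, hcoeffs.2.2⟩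

theorem apply_eq_zero_of_apply_eq_zero (h : PullbackVanishes a b c d) (hR : 2 < ENat.card R)
    (hb : b ≠ 0) {u : M} (hu : b u = 0) (hau : a u = 0) : d u = 0 := by
  by_contra hdu
  obtain ⟨v, hv⟩ := DFunLike.ne_iff.1 hb
  obtain ⟨hlin, hquad⟩ := h.coeffs_add_smul hR hu v
  have hac : a v * c u = 0 := by
    refine (mul_eq_zero.1 ?_).resolve_right hdu
    linear_combination hquad - (c u * d v + c v * d u) * hau
  have hcb : a v * c v = b v ^ 2 := by
    refine mul_right_cancel₀ hdu ?_
    linear_combination hlin - (c v * d v - b v ^ 2) * hau - d v * hac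
  have hav : a v = 0 := by
    refine (mul_eq_zero.1 ?_).resolve_left (pow_ne_zero 2 hv)
    linear_combination d v * hcb - h v
  exact pow_ne_zero 2 hv (by rw [← hcb, hav, zero_mul])

theorem eq_zero_and_eq_zero_of_apply_eq_zero (h : PullbackVanishes a b c d)
    (hR : 2 < ENat.card R) (hb : b ≠ 0) {u : M} (hu : b u = 0) (hau : a u = 0) (hdu : d u = 0)
    (hcu : c u ≠ 0) : a = 0 ∧ d = 0 := by
  have hvanish {v : M} (hv : b v ≠ 0) : a v = 0 ∧ d v = 0 := by
    have hprod : a v * d v = 0 := by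
      refine (mul_eq_zero.1 ?_).resolve_right hcu
      simpa [hau, hdu, mul_right_comm] using (h.coeffs_add_smul hR hu v).1
    have hsum : a v + d v = 0 := by
      refine (mul_eq_zero.1 ?_).resolve_left (pow_ne_zero 2 hv)
      linear_combination c v * hprod - h v
    rcases mul_eq_zero.1 hprod with hav | hdv
    · exact ⟨hav, by simpa [hav] using hsum⟩
    · exact ⟨by simpa [hdv] using hsum, hdv⟩
  exact ⟨eq_zero_of_forall_apply_ne_zero_imp hb fun _ hv ↦ (hvanish hv).1,
    eq_zero_of_forall_apply_ne_zero_imp hb fun _ hv ↦ (hvanish hv).2⟩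

theorem eq_zero_and_add_eq_zero_of_apply_ne_zero (h : PullbackVanishes a b c d)
    (hR : 2 < ENat.card R) (hb : b ≠ 0) {u : M} (hu : b u = 0) (hau : a u ≠ 0) (hdu : d u ≠ 0) :
    c = 0 ∧ a + d = 0 := by
  have hcu : c u = 0 := by simpa [hu, hau, hdu] using h u
  have hc : c = 0 := LinearMap.ext fun v ↦ by
    simpa [hcu, hau, hdu] using (h.coeffs_add_smul hR hu v).2
  refine ⟨hc, eq_zero_of_forall_apply_ne_zero_imp hb fun v hv ↦ ?_⟩
  refine (mul_eq_zero.1 ?_).resolve_left (pow_ne_zero 2 hv)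
  simpa [hc] using (h v).symm

theorem eq_zero_cases (h : PullbackVanishes a b c d) (hR : 2 < ENat.card R) {u : M}
    (hu : b u = 0) (hne : ¬(a u = 0 ∧ c u = 0 ∧ d u = 0)) :
    (a = 0 ∧ b = 0) ∨ (b = 0 ∧ d = 0) ∨ (b = 0 ∧ c = 0) ∨ (a = 0 ∧ d = 0) ∨
      (c = 0 ∧ a + d = 0) := by
  by_cases hb : b = 0
  · have hprod (v : M) : a v * c v * d v = 0 := by simpa [hb] using h v
    have hzero := eq_zero_or_eq_zero_or_eq_zero_of_forall_apply_mul_mul_eq_zero hR hprod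
    tauto
  · by_cases hau : a u = 0
    · have hdu := h.apply_eq_zero_of_apply_eq_zero hR hb hu hau
      have hcu : c u ≠ 0 := fun hcu ↦ hne ⟨hau, hcu, hdu⟩
      exact .inr <| .inr <| .inr <| .inl <|
        h.eq_zero_and_eq_zero_of_apply_eq_zero hR hb hu hau hdu hcu
    · have hdu : d u ≠ 0 := mt (h.symm.apply_eq_zero_of_apply_eq_zero hR hb hu) hau
      exact .inr <| .inr <| .inr <| .inr <|
        h.eq_zero_and_add_eq_zero_of_apply_ne_zero hR hb hu hau hdu

end PullbackVanishes

end LinearForms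

theorem exists_mem_ne_zero_apply_eq_zero {K V : Type*} [DivisionRing K] [AddCommGroup V]
    [Module K V] {W : Submodule K V} (hW : 1 < Module.finrank K W) (f : V →ₗ[K] K) :
    ∃ u ∈ W, u ≠ 0 ∧ f u = 0 := by
  have : FiniteDimensional K W := Module.finite_of_finrank_pos (zero_lt_one.trans hW)
  have hker : (f.domRestrict W).ker ≠ ⊥ :=
    LinearMap.ker_ne_bot_of_finrank_lt (by rwa [Module.finrank_self])
  obtain ⟨u, hfu, hu⟩ := Submodule.exists_mem_ne_zero_of_ne_bot hker
  exact ⟨u, u.2, by simpa using hu, hfu⟩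

theorem eq_span_pair_of_le {K V : Type*} [DivisionRing K] [AddCommGroup V] [Module K V]
    {W : Submodule K V} (hW : Module.finrank K W = 2) {x y : V}
    (h : W ≤ Submodule.span K {x, y}) : W = Submodule.span K {x, y} := by
  classical
  have : FiniteDimensional K (Submodule.span K {x, y}) :=
    FiniteDimensional.span_of_finite K (Set.toFinite _)
  refine Submodule.eq_of_le_of_finrank_le h ?_
  calc Module.finrank K (Submodule.span K {x, y})
    _ ≤ ({x, y} : Set V).toFinset.card := finrank_span_le_card _
    _ ≤ 2 := by simpa using Finset.card_le_two
    _ = Module.finrank K W := hW.symm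

theorem eq_span_pair_single {K ι : Type*} [DivisionRing K] [Finite ι] [DecidableEq ι]
    {W : Submodule K (ι → K)} (hW : Module.finrank K W = 2) {i j : ι}
    (h : ∀ w ∈ W, ∀ k, k ≠ i → k ≠ j → w k = 0) :
    W = Submodule.span K {Pi.single i 1, Pi.single j 1} := by
  refine eq_span_pair_of_le hW fun w hw ↦ ?_
  have hsupp : w ∈ Submodule.span K (Pi.basisFun K ι '' {i, j}) := by
    refine (Pi.basisFun K ι).mem_span_image.2 fun k hk ↦ ?_
    by_contra hkij
    obtain ⟨hki, hkj⟩ : k ≠ i ∧ k ≠ j := by simpa using hkij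
    exact Finsupp.mem_support_iff.1 hk (h w hw k hki hkj)
  simpa [Set.image_pair] using hsupp

section Field

variable {K : Type*} [Field K]

theorem coordinates_cases_of_forall_mem_cubic_eq_zero (hK : 2 < ENat.card K)
    {W : Submodule K (Fin 4 → K)} (hW : 1 < Module.finrank K W)
    (h : ∀ x ∈ W, x 0 * x 2 * x 3 - x 1 ^ 2 * x 3 - x 0 * x 1 ^ 2 = 0) :
    (∀ x ∈ W, x 0 = 0 ∧ x 1 = 0) ∨ (∀ x ∈ W, x 1 = 0 ∧ x 3 = 0) ∨
      (∀ x ∈ W, x 1 = 0 ∧ x 2 = 0) ∨ (∀ x ∈ W, x 0 = 0 ∧ x 3 = 0) ∨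
      (∀ x ∈ W, x 2 = 0 ∧ x 0 + x 3 = 0) := by
  let coord (i : Fin 4) : W →ₗ[K] K := (LinearMap.proj i).domRestrict W
  have hcoord : PullbackVanishes (coord 0) (coord 1) (coord 2) (coord 3) := fun x ↦ by
    change x.1 0 * x.1 2 * x.1 3 = x.1 1 ^ 2 * (x.1 0 + x.1 3)
    linear_combination h x x.2
  obtain ⟨u, huW, hu, hu₁⟩ := exists_mem_ne_zero_apply_eq_zero hW (LinearMap.proj 1)
  have hne : ¬(u 0 = 0 ∧ u 2 = 0 ∧ u 3 = 0) := fun ⟨hu₀, hu₂, hu₃⟩ ↦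
    hu (funext fun i ↦ by fin_cases i <;> assumption)
  simpa [LinearMap.ext_iff, forall_and, coord] using
    hcoord.eq_zero_cases hK (u := ⟨u, huW⟩) hu₁ hne

theorem cubic2A1A3_lines_general (hK : 2 < ENat.card K) (W : Submodule K (Fin 4 → K))
    (hW : Module.finrank K W = 2) :
    (∀ x ∈ W, eval x (X 0 * X 2 * X 3 - X 1 ^ 2 * X 3 - X 0 * X 1 ^ 2) = 0) ↔
      W = Submodule.span K {Pi.single 2 1, Pi.single 3 1} ∨
      W = Submodule.span K {Pi.single 0 1, Pi.single 2 1} ∨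
      W = Submodule.span K {Pi.single 0 1, Pi.single 3 1} ∨
      W = Submodule.span K {Pi.single 1 1, Pi.single 2 1} ∨
      W = Submodule.span K {Pi.single 0 1 - Pi.single 3 1, Pi.single 1 1} := by
  simp only [map_sub, map_mul, map_pow, eval_X]
  constructor
  · intro h
    refine (coordinates_cases_of_forall_mem_cubic_eq_zero hK (by omega) h).imp ?_ <|
      .imp ?_ <| .imp ?_ <| .imp ?_ ?_ <;> intro hzero
    iterate 4
      exact eq_span_pair_single hW fun w hw k _ _ ↦ by
        obtain ⟨_, _⟩ := hzero w hw
        fin_cases k <;> first | assumption | contradiction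
    refine eq_span_pair_of_le hW fun w hw ↦ Submodule.mem_span_pair.2 ⟨w 0, w 1, ?_⟩
    obtain ⟨hw₂, hw₀₃⟩ := hzero w hw
    ext k
    fin_cases k <;> simp [hw₂, neg_eq_of_add_eq_zero_right hw₀₃]
  · rintro (rfl | rfl | rfl | rfl | rfl) x hx <;>
      obtain ⟨s, t, rfl⟩ := Submodule.mem_span_pair.1 hx <;> simp [mul_comm]

end Field

theorem cubic2A1A3_lines (W : Submodule ℂ (Fin 4 → ℂ)) (hW : Module.finrank ℂ W = 2) :
    (∀ x ∈ W, eval x cubic2A1A3 = 0) ↔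
      W = Submodule.span ℂ {e 2, e 3} ∨
      W = Submodule.span ℂ {e 0, e 2} ∨
      W = Submodule.span ℂ {e 0, e 3} ∨
      W = Submodule.span ℂ {e 1, e 2} ∨
      W = Submodule.span ℂ {e 0 - e 3, e 1} :=
  cubic2A1A3_lines_general (by simpa using ENat.natCast_lt_top 2) W hW
end

section
/- Let h = t3·(t0·t2 − t1²) + t0³ in ℂ[t0,t1,t2,t3]. Then the set of points x ∈ ℂ⁴ at which all four partial derivatives of h vanish, {x ∈ ℂ⁴ : ∀ i, (∂ᵢ h)(x) = 0}, is exactly ℂ·e2 ∪ ℂ·e3. (Hence the cubic surface {h = 0} ⊂ ℙ³ of type A1A5 has exactly two singular points: (0:0:0:1) of type A5 and (0:0:1:0) of type A1.) -/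
open MvPolynomial

noncomputable def cubicA1A5 : MvPolynomial (Fin 4) ℂ :=
  X 3 * (X 0 * X 2 - X 1 ^ 2) + X 0 ^ 3

/-! On the critical locus `t₃ t₀ = 0`, so multiplying `∂₀h = t₃ t₂ + 3 t₀²` by `t₀` leaves
`3 t₀³ = 0`. Away from characteristic `3` this forces `t₀ = 0`, then `∂₃h = t₀ t₂ - t₁²` gives
`t₁ = 0`, and all that remains of the four equations is `t₃ t₂ = 0`. -/

theorem mem_span_singleton_single_one_iff {ι R : Type*} [DecidableEq ι] [Semiring R] {i : ι}
    {x : ι → R} : x ∈ Submodule.span R {Pi.single i (1 : R)} ↔ ∀ j ≠ i, x j = 0 := by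
  rw [Submodule.mem_span_singleton]
  constructor
  · rintro ⟨a, rfl⟩ j hj
    simp [hj]
  · intro hx
    refine ⟨x i, funext fun j ↦ ?_⟩
    obtain rfl | hj := eq_or_ne j i
    · simp
    · simp [hj, hx j hj]

/-- The `A₁A₅` cubic form `t₃ (t₀ t₂ - t₁²) + t₀³` with coefficients in an arbitrary commutative
ring; over `ℂ` it is `cubicA1A5` by definition. -/
noncomputable def cubicA1A5Over (R : Type*) [CommRing R] : MvPolynomial (Fin 4) R :=
  X 3 * (X 0 * X 2 - X 1 ^ 2) + X 0 ^ 3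

section

variable {R : Type*} [CommRing R]

theorem eval_pderiv_cubicA1A5Over (x : Fin 4 → R) (i : Fin 4) :
    eval x (pderiv i (cubicA1A5Over R)) =
      ![x 3 * x 2 + 3 * x 0 ^ 2, -(x 3 * (2 * x 1)), x 3 * x 0, x 0 * x 2 - x 1 ^ 2] i := by
  fin_cases i <;> simp [cubicA1A5Over, pderiv_X]

theorem forall_eval_pderiv_cubicA1A5Over_eq_zero_iff [IsReduced R] (h3 : IsLeftRegular (3 : R))
    {x : Fin 4 → R} :
    (∀ i, eval x (pderiv i (cubicA1A5Over R)) = 0) ↔ x 0 = 0 ∧ x 1 = 0 ∧ x 3 * x 2 = 0 := by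
  simp only [eval_pderiv_cubicA1A5Over]
  constructor
  · intro h
    have d0 : x 3 * x 2 + 3 * x 0 ^ 2 = 0 := h 0
    have d2 : x 3 * x 0 = 0 := h 2
    have d3 : x 0 * x 2 - x 1 ^ 2 = 0 := h 3
    have cube : 3 * x 0 ^ 3 = 0 := by linear_combination x 0 * d0 - x 2 * d2
    have x0 : x 0 = 0 := eq_zero_of_pow_eq_zero (h3.mul_left_eq_zero_iff.mp cube)
    have x1 : x 1 = 0 := by simpa [x0] using d3
    exact ⟨x0, x1, by simpa [x0] using d0⟩
  · rintro ⟨x0, x1, x32⟩ i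
    fin_cases i <;> simp [x0, x1, x32]

theorem cubicA1A5_singular_locus_general [NoZeroDivisors R] (h3 : (3 : R) ≠ 0) :
    {x : Fin 4 → R | ∀ i, eval x (pderiv i (cubicA1A5Over R)) = 0} =
      (Submodule.span R {(Pi.single 2 1 : Fin 4 → R)} : Set (Fin 4 → R)) ∪
      (Submodule.span R {(Pi.single 3 1 : Fin 4 → R)} : Set (Fin 4 → R)) := by
  ext x
  calc
    x ∈ {x : Fin 4 → R | ∀ i, eval x (pderiv i (cubicA1A5Over R)) = 0}
    _ ↔ x 0 = 0 ∧ x 1 = 0 ∧ x 3 * x 2 = 0 :=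
      forall_eval_pderiv_cubicA1A5Over_eq_zero_iff (IsRegular.of_ne_zero h3).left
    _ ↔ (x 0 = 0 ∧ x 1 = 0 ∧ x 3 = 0) ∨ (x 0 = 0 ∧ x 1 = 0 ∧ x 2 = 0) := by
      simp only [mul_eq_zero, and_or_left]
    _ ↔ _ := by
      simp [mem_span_singleton_single_one_iff, Fin.forall_fin_succ]

end

theorem cubicA1A5_singular_locus :
    {x : Fin 4 → ℂ | ∀ i, eval x (pderiv i cubicA1A5) = 0} =
      (Submodule.span ℂ {e 2} : Set (Fin 4 → ℂ)) ∪
      (Submodule.span ℂ {e 3} : Set (Fin 4 → ℂ)) :=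
  cubicA1A5_singular_locus_general three_ne_zero
end

section
/- Let f6 = t0²·t2 + t1²·t3 in ℂ[t0,t1,t2,t3] and let L = {x ∈ ℂ⁴ : x0 = 0 and x1 = 0}. For every 3-dimensional ℂ-subspace H of ℂ⁴ with L ⊆ H, there exists a point x ∈ H with f6(x) = 0 and x ∉ L. (Geometrically: every plane in ℙ³ containing the singular line L of the non-normal cubic surface X6 = {f6 = 0} meets X6 in a strictly larger set than L; in particular no plane cuts X6 in 3L, so L is not a triple line on X6.) -/
open MvPolynomial

noncomputable def cubicX6 : MvPolynomial (Fin 4) ℂ :=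
  X 0 ^ 2 * X 2 + X 1 ^ 2 * X 3

/-!
The line `M = {x₂ = x₃ = 0}` lies on `X6` and is skew to the line `L = {x₀ = x₁ = 0}`. Since `L` and
`M` together span the whole space, modularity of the lattice of submodules shows that every `H`
strictly containing `L` meets `M` outside `L`.
-/

theorem exists_mem_inf_notMem_of_lt_of_codisjoint {R V : Type*} [Ring R] [AddCommGroup V]
    [Module R V] {L M H : Submodule R V} (hLH : L < H) (hLM : Codisjoint L M) :
    ∃ x ∈ H ⊓ M, x ∉ L :=
  SetLike.not_le_iff_exists.mp fun hinf : H ⊓ M ≤ L ↦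
    hLH.ne (eq_of_le_of_inf_le_of_le_sup hLH.le hinf (le_top.trans hLM.eq_top.ge))

theorem codisjoint_spanSubset_of_union_eq_univ {R ι : Type*} [Semiring R] [Finite ι]
    {s t : Set ι} (hst : s ∪ t = Set.univ) :
    Codisjoint (Pi.spanSubset R s) (Pi.spanSubset R t) := by
  rw [codisjoint_iff, Pi.spanSubset, Pi.spanSubset, ← Submodule.span_union, ← Set.image_union,
    hst, Set.image_univ, Module.Basis.span_eq]

theorem coe_spanSubset_two_three {R : Type*} [Semiring R] :
    (Pi.spanSubset R ({2, 3} : Set (Fin 4)) : Set (Fin 4 → R)) = {x | x 0 = 0 ∧ x 1 = 0} := by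
  ext x
  simp [Pi.mem_spanSubset_iff, Fin.forall_fin_succ]

theorem cubicX6_eval_eq_zero_of_mem_spanSubset {R : Type*} [CommSemiring R]
    {x : Fin 4 → R} (hx : x ∈ Pi.spanSubset R {0, 1}) :
    eval x (X 0 ^ 2 * X 2 + X 1 ^ 2 * X 3) = 0 := by
  have h2 : x 2 = 0 := Pi.mem_spanSubset_iff.mp hx 2 (by decide)
  have h3 : x 3 = 0 := Pi.mem_spanSubset_iff.mp hx 3 (by decide)
  simp [h2, h3]

theorem cubicX6_no_triple_line_general {R : Type*} [CommRing R] {H : Submodule R (Fin 4 → R)}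
    (hL : {x : Fin 4 → R | x 0 = 0 ∧ x 1 = 0} ⊂ (H : Set (Fin 4 → R))) :
    ∃ x ∈ H, eval x (X 0 ^ 2 * X 2 + X 1 ^ 2 * X 3) = 0 ∧
      x ∉ {x : Fin 4 → R | x 0 = 0 ∧ x 1 = 0} := by
  rw [← coe_spanSubset_two_three, SetLike.coe_ssubset_coe] at hL
  have hLM : Codisjoint (Pi.spanSubset R ({2, 3} : Set (Fin 4))) (Pi.spanSubset R {0, 1}) :=
    codisjoint_spanSubset_of_union_eq_univ <| Set.eq_univ_of_forall (by decide)
  obtain ⟨x, ⟨hxH, hxM⟩, hxL⟩ := exists_mem_inf_notMem_of_lt_of_codisjoint hL hLM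
  rw [← coe_spanSubset_two_three]
  exact ⟨x, hxH, cubicX6_eval_eq_zero_of_mem_spanSubset hxM, hxL⟩

theorem cubicX6_no_triple_line (H : Submodule ℂ (Fin 4 → ℂ))
    (hH : Module.finrank ℂ H = 3)
    (hL : {x : Fin 4 → ℂ | x 0 = 0 ∧ x 1 = 0} ⊆ (H : Set (Fin 4 → ℂ))) :
    ∃ x ∈ H, eval x cubicX6 = 0 ∧ x ∉ {x : Fin 4 → ℂ | x 0 = 0 ∧ x 1 = 0} := by
  refine cubicX6_no_triple_line_general (hL.ssubset_of_ne fun hLH ↦ ?_)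
  have hspan : Pi.spanSubset ℂ {2, 3} = H :=
    SetLike.coe_injective (coe_spanSubset_two_three.trans hLH)
  have hfinrank : Module.finrank ℂ H = 2 := by
    rw [← hspan, Pi.dim_spanSubset, Set.ncard_pair (by decide)]
  omega
end

section
/- Let f7 = t0·t1·t2 + t0²·t3 + t1³ in ℂ[t0,t1,t2,t3] and let L = {x ∈ ℂ⁴ : x0 = 0 and x1 = 0}. For every 3-dimensional ℂ-subspace H of ℂ⁴ with L ⊆ H, one has {x ∈ H : f7(x) = 0} = L if and only if H = {x ∈ ℂ⁴ : x0 = 0}. (Geometrically: the plane {t0 = 0} is the unique plane in ℙ³ whose intersection with the non-normal cubic surface X7 = {f7 = 0} is set-theoretically the line L; on this plane the intersection is 3L, so there is a unique plane making L a triple line.) -/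
/-!
The cubic restricts to `t1 ^ 3` on the plane `t0 = 0`, which therefore meets the surface in `3L`.
Conversely, let `H` be a subspace containing `L` and a point `x` with `x 0 ≠ 0`. The cubic is linear
in `t3` with coefficient `t0 ^ 2`, and translating by `L` changes `t2` and `t3` freely; so `H`
contains points of the surface off `L`. Hence if `H` meets the surface exactly in `L`, then `H` lies
between `L` and the plane `t0 = 0`, where `L` has codimension one.
-/

open MvPolynomial

noncomputable def cubicX7 : MvPolynomial (Fin 4) ℂ :=
  X 0 * X 1 * X 2 + X 0 ^ 2 * X 3 + X 1 ^ 3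

/-- The normal form of the cubic surface of type X7, with coefficients in an arbitrary semiring;
`cubicX7` is the case of `ℂ`. -/
noncomputable def normalFormX7 (R : Type*) [CommSemiring R] : MvPolynomial (Fin 4) R :=
  X 0 * X 1 * X 2 + X 0 ^ 2 * X 3 + X 1 ^ 3

/-- The cone in `R⁴` over the plane `t0 = 0`, as a submodule. -/
def triplePlaneX7 (R : Type*) [Semiring R] : Submodule R (Fin 4 → R) :=
  LinearMap.ker (LinearMap.proj 0)

/-- The cone in `R⁴` over the line `L : t0 = t1 = 0`, the double line of the surface X7,
as a submodule. -/
def doubleLineX7 (R : Type*) [Semiring R] : Submodule R (Fin 4 → R) :=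
  LinearMap.ker (LinearMap.proj 0) ⊓ LinearMap.ker (LinearMap.proj 1)

theorem mem_triplePlaneX7 {R : Type*} [Semiring R] {x : Fin 4 → R} :
    x ∈ triplePlaneX7 R ↔ x 0 = 0 :=
  Iff.rfl

theorem mem_doubleLineX7 {R : Type*} [Semiring R] {x : Fin 4 → R} :
    x ∈ doubleLineX7 R ↔ x 0 = 0 ∧ x 1 = 0 :=
  Iff.rfl

theorem eval_normalFormX7 {R : Type*} [CommSemiring R] (x : Fin 4 → R) :
    eval x (normalFormX7 R) = x 0 * x 1 * x 2 + x 0 ^ 2 * x 3 + x 1 ^ 3 := by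
  simp only [normalFormX7, map_add, map_mul, map_pow, eval_X]

theorem eval_normalFormX7_of_mem_triplePlaneX7 {R : Type*} [CommSemiring R] {x : Fin 4 → R}
    (hx : x ∈ triplePlaneX7 R) : eval x (normalFormX7 R) = x 1 ^ 3 := by
  simp [eval_normalFormX7, mem_triplePlaneX7.mp hx]

theorem mem_triplePlaneX7_and_eval_eq_zero_iff {R : Type*} [CommSemiring R] [IsReduced R]
    {x : Fin 4 → R} :
    x ∈ triplePlaneX7 R ∧ eval x (normalFormX7 R) = 0 ↔ x ∈ doubleLineX7 R :=
  and_congr_right fun hx ↦ by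
    rw [eval_normalFormX7_of_mem_triplePlaneX7 hx, pow_eq_zero_iff three_ne_zero]
    rfl

theorem le_triplePlaneX7_of_forall_eval_eq_zero {R : Type*} [CommRing R] [IsReduced R]
    {H : Submodule R (Fin 4 → R)} (hL : doubleLineX7 R ≤ H)
    (hH : ∀ x ∈ H, eval x (normalFormX7 R) = 0 → x ∈ triplePlaneX7 R) :
    H ≤ triplePlaneX7 R := by
  intro x hx
  -- Scaling `x` by `x 0 ^ 2` clears the denominator in the value of `t3` that solves the cubic.
  let y : Fin 4 → R := ![x 0 ^ 3, x 0 ^ 2 * x 1, 0, -x 1 ^ 3]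
  have hyx : y - x 0 ^ 2 • x ∈ doubleLineX7 R := by
    simp only [mem_doubleLineX7, Pi.sub_apply, Pi.smul_apply, smul_eq_mul, y, Matrix.cons_val]
    exact ⟨by ring, by ring⟩
  have hyH : y ∈ H := (H.sub_mem_iff_left (H.smul_mem _ hx)).mp (hL hyx)
  have hy : eval y (normalFormX7 R) = 0 := by
    simp only [eval_normalFormX7, y, Matrix.cons_val]
    ring
  have hy0 : x 0 ^ 3 = 0 := mem_triplePlaneX7.mp (hH y hyH hy)
  exact eq_zero_of_pow_eq_zero hy0

theorem ker_proj_inf_ker_proj_covBy {K ι : Type*} [DivisionRing K] {i j : ι} (hij : i ≠ j) :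
    LinearMap.ker (LinearMap.proj i : (ι → K) →ₗ[K] K) ⊓ LinearMap.ker (LinearMap.proj j) ⋖
      LinearMap.ker (LinearMap.proj i) := by
  classical
  have hj : IsCoatom (LinearMap.ker (LinearMap.proj j : (ι → K) →ₗ[K] K)) :=
    LinearMap.isCoatom_ker_of_surjective (LinearMap.proj_surjective j)
  have hsup : LinearMap.ker (LinearMap.proj i : (ι → K) →ₗ[K] K) ⊔
      LinearMap.ker (LinearMap.proj j) = ⊤ := by
    refine hj.2 _ (right_lt_sup.mpr fun hle ↦ ?_)
    have hmem : Pi.single j (1 : K) ∈ LinearMap.ker (LinearMap.proj i : (ι → K) →ₗ[K] K) := by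
      simp [hij]
    simpa using hle hmem
  exact inf_covBy_of_covBy_sup_right (hsup ▸ hj.covBy_top)

theorem doubleLineX7_covBy_triplePlaneX7 (K : Type*) [DivisionRing K] :
    doubleLineX7 K ⋖ triplePlaneX7 K :=
  ker_proj_inf_ker_proj_covBy zero_ne_one

theorem finrank_doubleLineX7_lt_three (K : Type*) [DivisionRing K] :
    Module.finrank K (doubleLineX7 K) < 3 := by
  have hcoatom : IsCoatom (triplePlaneX7 K) :=
    LinearMap.isCoatom_ker_of_surjective (LinearMap.proj_surjective 0)
  have hline := Submodule.finrank_lt_finrank_of_lt (doubleLineX7_covBy_triplePlaneX7 K).lt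
  have hplane := Submodule.finrank_lt hcoatom.ne_top
  rw [Module.finrank_fin_fun] at hplane
  lia

theorem cubicX7_unique_triple_plane_general {K : Type*} [Field K]
    (H : Submodule K (Fin 4 → K)) :
    {x : Fin 4 → K | x ∈ H ∧ eval x (normalFormX7 K) = 0} = doubleLineX7 K ↔
      H = doubleLineX7 K ∨ H = triplePlaneX7 K := by
  rw [Set.ext_iff]
  constructor
  · intro h
    have hline : doubleLineX7 K ≤ H := fun x hx ↦ ((h x).mpr hx).1
    have hplane : H ≤ triplePlaneX7 K :=
      le_triplePlaneX7_of_forall_eval_eq_zero hline fun x hx hx0 ↦ ((h x).mp ⟨hx, hx0⟩).1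
    exact (doubleLineX7_covBy_triplePlaneX7 K).eq_or_eq hline hplane
  · rintro (rfl | rfl) x
    · exact and_iff_left_of_imp fun hx ↦
        (mem_triplePlaneX7_and_eval_eq_zero_iff.mpr hx).2
    · exact mem_triplePlaneX7_and_eval_eq_zero_iff

theorem cubicX7_unique_triple_plane (H : Submodule ℂ (Fin 4 → ℂ))
    (hH : Module.finrank ℂ H = 3)
    (hL : {x : Fin 4 → ℂ | x 0 = 0 ∧ x 1 = 0} ⊆ (H : Set (Fin 4 → ℂ))) :
    {x : Fin 4 → ℂ | x ∈ H ∧ eval x cubicX7 = 0} = {x : Fin 4 → ℂ | x 0 = 0 ∧ x 1 = 0} ↔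
      (H : Set (Fin 4 → ℂ)) = {x : Fin 4 → ℂ | x 0 = 0} := by
  have hne : H ≠ doubleLineX7 ℂ := by
    rintro rfl
    exact (finrank_doubleLineX7_lt_three ℂ).ne hH
  exact (cubicX7_unique_triple_plane_general H).trans <|
    (or_iff_right hne).trans SetLike.coe_set_eq.symm
end

section
/- Let f8 = t1³ + t2³ + t1·t2·t3 in ℂ[t0,t1,t2,t3] and let L = {x ∈ ℂ⁴ : x1 = 0 and x2 = 0}. For every 3-dimensional ℂ-subspace H of ℂ⁴ with L ⊆ H, one has {x ∈ H : f8(x) = 0} = L if and only if H = {x ∈ ℂ⁴ : x1 = 0} or H = {x ∈ ℂ⁴ : x2 = 0}. (Geometrically: there are exactly two planes in ℙ³ whose intersection with the non-normal cubic surface X8 = {f8 = 0} is set-theoretically the line L; on each of these planes the intersection is 3L, so there are exactly two planes making L a triple line.) -/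
/-!
The surface `t1³ + t2³ + t1 t2 t3 = 0` is linear in `t3` with leading coefficient `t1 t2`. Hence a
point with `t1 t2 ≠ 0` can be moved onto the surface by changing only its last coordinate, that is,
by translating it along `L`. A subspace `H` containing `L` is stable under such translations, so `H`
meets the surface in `L` alone only if `t1 t2` vanishes on `H`; conversely, where `t1 t2 = 0` the
equation reduces to `t1³ + t2³ = 0` and forces `t1 = t2 = 0`. Finally, a subspace contained in the
union of the planes `t1 = 0` and `t2 = 0` is contained in one of them, and equals it for dimension
reasons.
-/

open MvPolynomial

noncomputable def cubicX8 : MvPolynomial (Fin 4) ℂ :=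
  X 1 ^ 3 + X 2 ^ 3 + X 1 * X 2 * X 3

section LinearForms

theorem forall_mul_apply_eq_zero_iff_le_ker_or_le_ker {R M : Type*} [Ring R] [NoZeroDivisors R]
    [AddCommGroup M] [Module R M] (H : Submodule R M) (f g : Module.Dual R M) :
    (∀ x ∈ H, f x * g x = 0) ↔ H ≤ LinearMap.ker f ∨ H ≤ LinearMap.ker g := by
  rw [← AddSubgroupClass.subset_union]
  simp [Set.subset_def]

variable {K V : Type*} [DivisionRing K] [AddCommGroup V] [Module K V]

theorem le_ker_dual_iff_eq_of_finrank_add_one_eq {H : Submodule K V} {f : Module.Dual K V}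
    (hf : f ≠ 0) (hH : Module.finrank K H + 1 = Module.finrank K V) :
    H ≤ LinearMap.ker f ↔ H = LinearMap.ker f := by
  have : FiniteDimensional K V := .of_finrank_pos (by lia)
  have hker := Module.Dual.finrank_ker_add_one_of_ne_zero hf
  exact ⟨fun hle => Submodule.eq_of_le_of_finrank_eq hle (by lia), le_of_eq⟩

theorem le_ker_proj_iff_coe_eq_of_finrank_add_one_eq {ι : Type*} [Fintype ι]
    {H : Submodule K (ι → K)} (hH : Module.finrank K H + 1 = Fintype.card ι) (i : ι) :
    H ≤ LinearMap.ker (LinearMap.proj i : (ι → K) →ₗ[K] K) ↔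
      (H : Set (ι → K)) = {x : ι → K | x i = 0} := by
  have hproj : (LinearMap.proj i : (ι → K) →ₗ[K] K) ≠ 0 :=
    fun h => one_ne_zero (LinearMap.congr_fun h 1)
  rw [le_ker_dual_iff_eq_of_finrank_add_one_eq hproj (by simpa using hH), ← SetLike.coe_set_eq]
  rfl

end LinearForms

section NodalCubicCone

/-- The cubic form of the normal form `X8` with coefficients in an arbitrary commutative semiring,
in the same coordinates as `cubicX8`. It defines the cone with vertex `(1 : 0 : 0 : 0)` over the
nodal plane cubic `t1³ + t2³ + t1 t2 t3 = 0`. -/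
noncomputable def nodalCubicCone (R : Type*) [CommSemiring R] : MvPolynomial (Fin 4) R :=
  X 1 ^ 3 + X 2 ^ 3 + X 1 * X 2 * X 3

theorem eval_nodalCubicCone {R : Type*} [CommSemiring R] (x : Fin 4 → R) :
    eval x (nodalCubicCone R) = x 1 ^ 3 + x 2 ^ 3 + x 1 * x 2 * x 3 := by
  simp [nodalCubicCone]

theorem eval_nodalCubicCone_eq_zero_iff_of_mul_eq_zero {R : Type*} [CommSemiring R]
    [NoZeroDivisors R] {x : Fin 4 → R} (hx : x 1 * x 2 = 0) :
    eval x (nodalCubicCone R) = 0 ↔ x 1 = 0 ∧ x 2 = 0 := by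
  rcases mul_eq_zero.mp hx with h | h <;> simp [eval_nodalCubicCone, h]

variable {K : Type*} [Field K]

theorem exists_eval_add_single_nodalCubicCone_eq_zero {x : Fin 4 → K} (hx : x 1 * x 2 ≠ 0) :
    ∃ c : K, eval (x + Pi.single 3 c) (nodalCubicCone K) = 0 := by
  refine ⟨-(x 1 ^ 3 + x 2 ^ 3) / (x 1 * x 2) - x 3, ?_⟩
  simp only [eval_nodalCubicCone, Pi.add_apply, Pi.single_eq_same,
    Pi.single_eq_of_ne (show (1 : Fin 4) ≠ 3 by decide),
    Pi.single_eq_of_ne (show (2 : Fin 4) ≠ 3 by decide), add_zero, add_sub_cancel]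
  rw [mul_div_cancel₀ _ hx, add_neg_cancel]

theorem nodalCubicCone_section_eq_line_iff_forall_mul_eq_zero {H : Submodule K (Fin 4 → K)}
    (hL : {x : Fin 4 → K | x 1 = 0 ∧ x 2 = 0} ⊆ (H : Set (Fin 4 → K))) :
    {x : Fin 4 → K | x ∈ H ∧ eval x (nodalCubicCone K) = 0} =
        {x : Fin 4 → K | x 1 = 0 ∧ x 2 = 0} ↔
      ∀ x ∈ H, x 1 * x 2 = 0 := by
  constructor
  · intro hsection x hx
    by_contra hne
    obtain ⟨c, hc⟩ := exists_eval_add_single_nodalCubicCone_eq_zero hne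
    have htranslate : x + Pi.single 3 c ∈ H := H.add_mem hx (hL (by simp))
    have hline := hsection.subset ⟨htranslate, hc⟩
    exact left_ne_zero_of_mul hne (by simpa using hline.1)
  · intro hmul
    ext x
    exact ⟨fun ⟨hx, hf⟩ => (eval_nodalCubicCone_eq_zero_iff_of_mul_eq_zero (hmul x hx)).mp hf,
      fun hx => ⟨hL hx, (eval_nodalCubicCone_eq_zero_iff_of_mul_eq_zero
        (mul_eq_zero_of_left hx.1 _)).mpr hx⟩⟩

end NodalCubicCone

theorem cubicX8_two_triple_planes_general {K : Type*} [Field K] (H : Submodule K (Fin 4 → K))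
    (hH : Module.finrank K H = 3)
    (hL : {x : Fin 4 → K | x 1 = 0 ∧ x 2 = 0} ⊆ (H : Set (Fin 4 → K))) :
    {x : Fin 4 → K | x ∈ H ∧ eval x (nodalCubicCone K) = 0} =
        {x : Fin 4 → K | x 1 = 0 ∧ x 2 = 0} ↔
      ((H : Set (Fin 4 → K)) = {x : Fin 4 → K | x 1 = 0} ∨
       (H : Set (Fin 4 → K)) = {x : Fin 4 → K | x 2 = 0}) := by
  have hcodim : Module.finrank K H + 1 = Fintype.card (Fin 4) := by simp [hH]
  rw [nodalCubicCone_section_eq_line_iff_forall_mul_eq_zero hL,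
    ← le_ker_proj_iff_coe_eq_of_finrank_add_one_eq hcodim,
    ← le_ker_proj_iff_coe_eq_of_finrank_add_one_eq hcodim]
  exact forall_mul_apply_eq_zero_iff_le_ker_or_le_ker H (LinearMap.proj 1) (LinearMap.proj 2)

theorem cubicX8_two_triple_planes (H : Submodule ℂ (Fin 4 → ℂ))
    (hH : Module.finrank ℂ H = 3)
    (hL : {x : Fin 4 → ℂ | x 1 = 0 ∧ x 2 = 0} ⊆ (H : Set (Fin 4 → ℂ))) :
    {x : Fin 4 → ℂ | x ∈ H ∧ eval x cubicX8 = 0} = {x : Fin 4 → ℂ | x 1 = 0 ∧ x 2 = 0} ↔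
      ((H : Set (Fin 4 → ℂ)) = {x : Fin 4 → ℂ | x 1 = 0} ∨
       (H : Set (Fin 4 → ℂ)) = {x : Fin 4 → ℂ | x 2 = 0}) :=
  cubicX8_two_triple_planes_general H hH hL
end
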